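/- There exists a sequence ε_n → 0 such that the following holds for every even n and every integer d with 4 ≤ d ≤ n-1 and d³ ≤ n, where k = ⌊d/4⌋. Sample (M_1,…,M_d) = G''(n,d). Fix i ∈ {1,…,k}, fix perfect matchings N_c for every colour c ∈ {4j-3, 4j-2, 4j-1 : j ∈ [k]}, fix t ∈ [1, n/4] and a matching M' of t edges, all of these pairwise edge-disjoint, such that the event E = { M_c = N_c for every fixed colour c, and M' ⊆ M_{4i} } has positive probability. Then for every pair of vertices u, v not covered by M' such that uv is not an edge of any N_c or of M', one has |P( uv ∈ M_{4i} | E ) − 1/(n-2t)| ≤ ε_n/(n-2t). -/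

import Mathlib

/-- `M` is an ordered `d`-tuple of pairwise edge-disjoint perfect matchings of `K_n`
(each matching being viewed as a 1-regular simple graph on `[n]`). -/
def IsPMTuple {n d : ℕ} (M : Fin d → SimpleGraph (Fin n)) : Prop :=
  (∀ i, ∀ v, Nat.card ((M i).neighborSet v) = 1) ∧
  ∀ i j, i ≠ j → Disjoint (M i) (M j)

open Classical in
/-- Probability that `G''(n,d)`, the uniformly random ordered `d`-tuple of pairwise
edge-disjoint perfect matchings of `K_n`, satisfies the property `A`. -/
noncomputable def tupleProb (n d : ℕ) (A : (Fin d → SimpleGraph (Fin n)) → Prop) : ℝ :=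
  ((Finset.univ.filter (fun M : Fin d → SimpleGraph (Fin n) =>
      IsPMTuple M ∧ A M)).card : ℝ) /
  ((Finset.univ.filter (fun M : Fin d → SimpleGraph (Fin n) => IsPMTuple M)).card : ℝ)

/-- The colour `c ∈ Fin d` (0-indexed) is one of the "fixed" colours, i.e. one of the
colours `4j-3, 4j-2, 4j-1` (1-indexed) with `j ∈ [⌊d/4⌋]`: all colours of the first
`⌊d/4⌋` groups of four except the matching colours `4j`. -/
def FixedColour (d : ℕ) (c : Fin d) : Prop :=
  c.val < 4 * (d / 4) ∧ c.val % 4 ≠ 3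

open Classical in
/-- Conditional probability, for the uniformly random tuple `G''(n,d)`, of the event `B`
given the event `E`. -/
noncomputable def tupleCondProb (n d : ℕ)
    (E B : (Fin d → SimpleGraph (Fin n)) → Prop) : ℝ :=
  ((Finset.univ.filter (fun M : Fin d → SimpleGraph (Fin n) =>
      IsPMTuple M ∧ E M ∧ B M)).card : ℝ) /
  ((Finset.univ.filter (fun M : Fin d → SimpleGraph (Fin n) =>
      IsPMTuple M ∧ E M)).card : ℝ)

/-!
The argument is by switching. In a tuple of matchings, an edge `{w, w'}` and an edge `{x, x'}` of
colour `c` can be replaced by `{w, x}` and `{w', x'}`, unless another colour already uses one of the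
new pairs; as each vertex meets at most `d` other edges, all but `O(d)` choices of `x` are allowed.
Let `m` be the number of vertices not covered by `M'`, and let `A` be the set of tuples of the
conditioned family `Ω` in which `uv` has colour `c`.

* A tuple in `A` has at least `m - 2 - 2d` switchings that destroy `uv`, and no tuple outside `A`
  is reached twice; hence `(m - 1 - 2d) |A| ≤ |Ω|`.
* Conversely, a tuple outside `A` can be switched to one in `A` unless `uv`, or the pair of the
  partners of `u` and `v`, is an edge of another colour. Each tuple in `A` is reached at most
  `m - 2` times, and the two exceptional families have relative size `O(d / n)`: the first by the
  bound above applied to the other colours, the second by one more switching, which moves the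
  partner of `v`.
-/

section Matchings

variable {V : Type*} {g L H : SimpleGraph V} {a b v w x : V}

/-- A perfect matching of the vertex set, encoded as a graph in which every vertex has exactly one
neighbour. -/
def IsOneFactor (g : SimpleGraph V) : Prop :=
  ∀ v, ∃! w, g.Adj v w

open Classical in
/-- The vertex matched to `v` in a perfect matching `g`. In an arbitrary graph it is some neighbour
of `v`, or `v` itself if there is none. -/
noncomputable def partner (g : SimpleGraph V) (v : V) : V :=
  if h : ∃ w, g.Adj v w then h.choose else v

open Classical in
/-- The graph obtained from `g` by exchanging the roles of the vertices `a` and `b`: in a perfect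
matching the edges `{a, a'}` and `{b, b'}` become `{b, a'}` and `{a, b'}`. -/
noncomputable def switch (g : SimpleGraph V) (a b : V) : SimpleGraph V :=
  g.comap (Equiv.swap a b)

theorem switch_switch (g : SimpleGraph V) (a b : V) : switch (switch g a b) a b = g := by
  ext x y
  simp [switch]

theorem isOneFactor_iff_natCard_neighborSet :
    IsOneFactor g ↔ ∀ v, Nat.card (g.neighborSet v) = 1 := by
  refine forall_congr' fun v => ?_
  rw [Nat.card_coe_set_eq, Set.ncard_eq_one]
  exact Set.singleton_iff_unique_mem.symm

namespace IsOneFactor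

theorem adj_partner (hg : IsOneFactor g) (v : V) : g.Adj v (partner g v) := by
  have h : ∃ w, g.Adj v w := (hg v).exists
  rw [partner, dif_pos h]
  exact h.choose_spec

theorem adj_iff (hg : IsOneFactor g) : g.Adj v w ↔ partner g v = w :=
  ⟨fun h => (hg v).unique (hg.adj_partner v) h, fun h => h ▸ hg.adj_partner v⟩

theorem partner_ne (hg : IsOneFactor g) (v : V) : partner g v ≠ v :=
  (hg.adj_partner v).ne'

theorem partner_partner (hg : IsOneFactor g) (v : V) : partner g (partner g v) = v :=
  hg.adj_iff.1 (hg.adj_partner v).symm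

protected theorem switch (hg : IsOneFactor g) (a b : V) : IsOneFactor (switch g a b) := by
  classical
  exact fun v => (Equiv.swap a b).bijective.existsUnique_iff.2 (by simpa [_root_.switch] using hg _)

open Classical in
theorem partner_switch (hg : IsOneFactor g) (a b x : V) :
    partner (switch g a b) x = Equiv.swap a b (partner g (Equiv.swap a b x)) := by
  rw [← (hg.switch a b).adj_iff]
  simpa [switch] using hg.adj_partner _

theorem partner_switch_partner (hg : IsOneFactor g) (hwx : w ≠ x) :
    partner (switch g (partner g w) x) w = x := by
  classical
  rw [hg.partner_switch, Equiv.swap_apply_of_ne_of_ne (hg.partner_ne w).symm hwx,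
    Equiv.swap_apply_left]

theorem partner_switch_of_ne (hg : IsOneFactor g) (hxa : x ≠ a) (hxb : x ≠ b)
    (hpa : partner g x ≠ a) (hpb : partner g x ≠ b) :
    partner (switch g a b) x = partner g x := by
  classical
  rw [hg.partner_switch, Equiv.swap_apply_of_ne_of_ne hxa hxb,
    Equiv.swap_apply_of_ne_of_ne hpa hpb]

theorem disjoint_iff (hg : IsOneFactor g) :
    Disjoint g H ↔ ∀ x, ¬ H.Adj x (partner g x) := by
  simp only [SimpleGraph.disjoint_left, hg.adj_iff, forall_eq']

theorem disjoint_switch (hg : IsOneFactor g) (hgH : Disjoint g H)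
    (hab : ¬ H.Adj a (partner g b)) (hba : ¬ H.Adj b (partner g a)) :
    Disjoint (switch g a b) H := by
  classical
  rw [hg.disjoint_iff] at hgH
  rw [(hg.switch a b).disjoint_iff]
  intro x
  have hp := hg.partner_partner
  rw [hg.partner_switch]
  simp only [Equiv.swap_apply_def]
  split_ifs <;> grind [SimpleGraph.adj_comm, hg.partner_ne]

end IsOneFactor

variable [Fintype V]

open Classical in
/-- The vertices that are not covered by the edges of `L`. -/
noncomputable def uncovered (L : SimpleGraph V) : Finset V :=
  {w | ∀ x, ¬ L.Adj w x}

theorem mem_uncovered : w ∈ uncovered L ↔ ∀ x, ¬ L.Adj w x := by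
  simp [uncovered]

theorem card_uncovered_add (hL : ∀ v w x, L.Adj v w → L.Adj v x → w = x) :
    (uncovered L).card + 2 * Nat.card L.edgeSet = Fintype.card V := by
  classical
  have degree_add : ∀ v, (if v ∈ uncovered L then 1 else 0) + L.degree v = 1 := by
    intro v
    split_ifs with hv
    · rw [(L.degree_eq_zero v).2 (mem_uncovered.1 hv)]
    · obtain ⟨w, hw⟩ : ∃ w, L.Adj v w := by simpa [mem_uncovered] using hv
      rw [zero_add, SimpleGraph.degree_eq_one_iff_existsUnique_adj]
      exact ⟨w, hw, fun x hx => hL v x w hx hw⟩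
  calc (uncovered L).card + 2 * Nat.card L.edgeSet
      = ∑ v, ((if v ∈ uncovered L then 1 else 0) + L.degree v) := by
        rw [Finset.sum_add_distrib, L.sum_degrees_eq_twice_card_edges, Nat.card_eq_fintype_card,
          SimpleGraph.edgeFinset_card]
        simp
    _ = Fintype.card V := by simp [degree_add]

theorem IsOneFactor.partner_mem_uncovered (hg : IsOneFactor g) (hLg : L ≤ g)
    (hw : w ∈ uncovered L) : partner g w ∈ uncovered L := by
  rw [mem_uncovered] at hw ⊢
  intro x hx
  have hxw : x = w := by rw [← hg.adj_iff.1 (hLg hx), hg.partner_partner]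
  exact hw _ (hxw ▸ hx.symm)

theorem le_switch (hLg : L ≤ g) (ha : a ∈ uncovered L) (hb : b ∈ uncovered L) :
    L ≤ switch g a b := by
  rw [mem_uncovered] at ha hb
  intro x y hxy
  have hx : x ≠ a ∧ x ≠ b := ⟨fun h => ha y (h ▸ hxy), fun h => hb y (h ▸ hxy)⟩
  have hy : y ≠ a ∧ y ≠ b := ⟨fun h => ha x (h ▸ hxy.symm), fun h => hb x (h ▸ hxy.symm)⟩
  simpa [switch, Equiv.swap_apply_of_ne_of_ne, hx, hy] using hLg hxy

end Matchings

section Switching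

open Finset

variable {V ι : Type*} {M : ι → SimpleGraph V} {c j : ι} {a b u v w x : V}

open Classical in
/-- The tuple obtained from `M` by applying `switch · a b` to colour `c` and leaving the other
colours unchanged. -/
noncomputable def switchColour (M : ι → SimpleGraph V) (c : ι) (a b : V) : ι → SimpleGraph V :=
  Function.update M c (switch (M c) a b)

/-- The union of all colours of the tuple `M` except `c`. -/
def otherColours (M : ι → SimpleGraph V) (c : ι) : SimpleGraph V :=
  ⨆ j ≠ c, M j

theorem switchColour_self : switchColour M c a b c = switch (M c) a b := by
  simp [switchColour]

theorem switchColour_of_ne (hj : j ≠ c) : switchColour M c a b j = M j := by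
  simp [switchColour, hj]

theorem switchColour_switchColour (M : ι → SimpleGraph V) (c : ι) (a b : V) :
    switchColour (switchColour M c a b) c a b = M := by
  simp [switchColour, switch_switch]

theorem otherColours_adj : (otherColours M c).Adj v w ↔ ∃ j ≠ c, (M j).Adj v w := by
  simp [otherColours]

theorem otherColours_switchColour :
    otherColours (switchColour M c a b) c = otherColours M c := by
  ext v w
  simp only [otherColours_adj]
  exact exists_congr fun j => and_congr_right fun hj => by rw [switchColour_of_ne hj]

theorem partner_switchColour_partner (hM : IsOneFactor (M c)) (hwx : w ≠ x) :
    partner (switchColour M c (partner (M c) w) x c) w = x := by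
  rw [switchColour_self, hM.partner_switch_partner hwx]

/-- The switching that exchanges `a` and `b` is its own inverse, so a tuple and a switching move
from it are determined by the resulting tuple and the pair `(a, b)`. -/
theorem mul_card_le_mul_card_of_switchColour {S T : Finset (ι → SimpleGraph V)} (w : V)
    (targets : (ι → SimpleGraph V) → Finset V)
    (reverseMoves : (ι → SimpleGraph V) → Finset (V × V)) {k l : ℝ}
    (hk : ∀ M ∈ S, k ≤ #(targets M)) (hl : ∀ M ∈ T, #(reverseMoves M) ≤ l)
    (h_mem : ∀ M ∈ S, ∀ x ∈ targets M, switchColour M c (partner (M c) w) x ∈ T)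
    (h_reverse : ∀ M ∈ S, ∀ x ∈ targets M,
      (partner (M c) w, x) ∈ reverseMoves (switchColour M c (partner (M c) w) x)) :
    k * #S ≤ l * #T := by
  have card_moves_le : #(S.sigma targets) ≤ #(T.sigma reverseMoves) := by
    refine card_le_card_of_injOn (fun q =>
      ⟨switchColour q.1 c (partner (q.1 c) w) q.2, (partner (q.1 c) w, q.2)⟩) ?_ ?_
    · rintro ⟨M, x⟩ hq
      rw [mem_coe, mem_sigma] at hq ⊢
      exact ⟨h_mem M hq.1 x hq.2, h_reverse M hq.1 x hq.2⟩
    · rintro ⟨M, x⟩ - ⟨M', x'⟩ - heq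
      obtain ⟨h_result, h_partner, rfl⟩ :
          switchColour M c (partner (M c) w) x = switchColour M' c (partner (M' c) w) x' ∧
            partner (M c) w = partner (M' c) w ∧ x = x' := by
        simpa using heq
      rw [← switchColour_switchColour M c (partner (M c) w) x, h_result, h_partner,
        switchColour_switchColour]
  calc k * #S = ∑ _M ∈ S, k := by rw [sum_const, nsmul_eq_mul, mul_comm]
    _ ≤ ∑ M ∈ S, (#(targets M) : ℝ) := sum_le_sum hk
    _ ≤ ∑ M ∈ T, (#(reverseMoves M) : ℝ) := by
        rw [card_sigma, card_sigma] at card_moves_le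
        exact_mod_cast card_moves_le
    _ ≤ ∑ _M ∈ T, l := sum_le_sum hl
    _ = l * #T := by rw [sum_const, nsmul_eq_mul, mul_comm]

open Classical in
/-- The vertices `x ∈ S` such that the edges of colour `c` at `w` and at `x` can be replaced by `wx`
and the pair of the two partners without using an edge of another colour. -/
noncomputable def switchTargets (M : ι → SimpleGraph V) (c : ι) (S : Finset V) (w : V) :
    Finset V :=
  {x ∈ S | ¬ (otherColours M c).Adj w x ∧
    ¬ (otherColours M c).Adj (partner (M c) w) (partner (M c) x)}

theorem mem_switchTargets {S : Finset V} :
    x ∈ switchTargets M c S w ↔ x ∈ S ∧ ¬ (otherColours M c).Adj w x ∧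
      ¬ (otherColours M c).Adj (partner (M c) w) (partner (M c) x) := by
  simp [switchTargets]

/-- The family `Ω` of tuples of perfect matchings is closed under all switchings of colour `c` that
involve only vertices of `U` and create no pair already used by another colour. -/
structure SwitchClosed (Ω : Finset (ι → SimpleGraph V)) (c : ι) (U : Finset V) : Prop where
  isOneFactor : ∀ M ∈ Ω, ∀ j, IsOneFactor (M j)
  partner_mem : ∀ M ∈ Ω, ∀ w ∈ U, partner (M c) w ∈ U
  switch_mem : ∀ M ∈ Ω, ∀ w ∈ U, ∀ x ∈ switchTargets M c U w,
    switchColour M c (partner (M c) w) x ∈ Ω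

variable {Ω : Finset (ι → SimpleGraph V)} {U : Finset V}

open Classical in
theorem SwitchClosed.card_not_adj_le (hΩ : SwitchClosed Ω c U) (huv : u ≠ v) (hu : u ∈ U)
    (hv : v ∈ U) :
    (#{M ∈ Ω | ¬ (M c).Adj u v ∧ v ∈ switchTargets M c U u} : ℝ) ≤
      (#U - 2) * #{M ∈ Ω | (M c).Adj u v} := by
  rw [← one_mul (#(filter _ _) : ℝ)]
  refine mul_card_le_mul_card_of_switchColour (c := c) u (fun _ => {v})
    (fun _ => (U \ {u, v}) ×ˢ {v}) (by simp) (fun _ _ => ?_) ?_ ?_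
  · have h_subset : {u, v} ⊆ U := insert_subset hu (singleton_subset_iff.2 hv)
    rw [card_product, card_singleton, mul_one, cast_card_sdiff h_subset, card_pair huv,
      Nat.cast_ofNat]
  · simp only [mem_filter, mem_singleton, forall_eq]
    rintro M ⟨hM, -, h_target⟩
    have hMc := hΩ.isOneFactor M hM c
    have h_new := hΩ.switch_mem M hM u hu v h_target
    exact ⟨h_new, (hΩ.isOneFactor _ h_new c).adj_iff.2 (partner_switchColour_partner hMc huv)⟩
  · simp only [mem_filter, mem_singleton, forall_eq]
    rintro M ⟨hM, h_adj, -⟩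
    have hMc := hΩ.isOneFactor M hM c
    rw [hMc.adj_iff] at h_adj
    simp [hΩ.partner_mem M hM u hu, hMc.partner_ne, h_adj]

open Classical in
theorem SwitchClosed.card_le (hΩ : SwitchClosed Ω c U) (huv : u ≠ v) (hu : u ∈ U) (hv : v ∈ U) :
    (#Ω : ℝ) ≤ (#U - 1) * #{M ∈ Ω | (M c).Adj u v} +
      #{M ∈ Ω | ¬ (M c).Adj u v ∧
        (otherColours M c).Adj (partner (M c) u) (partner (M c) v)} +
      #{M ∈ Ω | (otherColours M c).Adj u v} := by
  have h_subset : Ω ⊆ {M ∈ Ω | (M c).Adj u v} ∪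
      {M ∈ Ω | ¬ (M c).Adj u v ∧ v ∈ switchTargets M c U u} ∪
      {M ∈ Ω | ¬ (M c).Adj u v ∧
        (otherColours M c).Adj (partner (M c) u) (partner (M c) v)} ∪
      {M ∈ Ω | (otherColours M c).Adj u v} := by
    intro M hM
    simp only [mem_union, mem_filter, mem_switchTargets]
    tauto
  have h_card := card_le_card h_subset
  grw [card_union_le, card_union_le, card_union_le] at h_card
  have h_real : (#Ω : ℝ) ≤ #{M ∈ Ω | (M c).Adj u v} +
      #{M ∈ Ω | ¬ (M c).Adj u v ∧ v ∈ switchTargets M c U u} +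
      #{M ∈ Ω | ¬ (M c).Adj u v ∧
        (otherColours M c).Adj (partner (M c) u) (partner (M c) v)} +
      #{M ∈ Ω | (otherColours M c).Adj u v} := by
    exact_mod_cast h_card
  linarith [hΩ.card_not_adj_le huv hu hv]

variable [Fintype ι]

open Classical in
/-- The neighbours of `w` in `otherColours M c` when `M` consists of perfect matchings. -/
noncomputable def otherPartners (M : ι → SimpleGraph V) (c : ι) (w : V) : Finset V :=
  (univ.erase c).image fun j => partner (M j) w

theorem mem_otherPartners (hM : ∀ j, IsOneFactor (M j)) :
    x ∈ otherPartners M c w ↔ (otherColours M c).Adj w x := by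
  simp [otherPartners, otherColours_adj, (hM _).adj_iff]

theorem card_otherPartners_le (M : ι → SimpleGraph V) (c : ι) (w : V) :
    #(otherPartners M c w) ≤ Fintype.card ι := by
  classical
  exact card_image_le.trans (card_le_univ _)

open Classical in
theorem card_sub_le_card_switchTargets_sdiff (hM : ∀ j, IsOneFactor (M j)) (c : ι)
    (U K : Finset V) (w : V) :
    (#U : ℝ) - #K - 2 * Fintype.card ι ≤ #(switchTargets M c (U \ K) w) := by
  set p := partner (M c)
  have h_subset : U ⊆ switchTargets M c (U \ K) w ∪ K ∪
      (otherPartners M c w ∪ (otherPartners M c (p w)).image p) := by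
    intro x hx
    have hx_image : (otherColours M c).Adj (p w) (p x) →
        ∃ y, (otherColours M c).Adj (p w) y ∧ p y = x :=
      fun h => ⟨p x, h, (hM c).partner_partner x⟩
    simp only [mem_union, mem_switchTargets, mem_sdiff, mem_otherPartners hM, mem_image]
    tauto
  have h_card : #U ≤ #(switchTargets M c (U \ K) w) + #K +
      (Fintype.card ι + Fintype.card ι) :=
    calc #U ≤ _ := card_le_card h_subset
      _ ≤ #(switchTargets M c (U \ K) w) + #K +
          (#(otherPartners M c w) + #((otherPartners M c (p w)).image p)) := by
        grw [card_union_le, card_union_le, card_union_le]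
      _ ≤ _ := by
        grw [card_image_le, card_otherPartners_le, card_otherPartners_le]
  have h_real : (#U : ℝ) ≤ #(switchTargets M c (U \ K) w) + #K +
      (Fintype.card ι + Fintype.card ι) := by
    exact_mod_cast h_card
  linarith

namespace SwitchClosed

open Classical in
theorem mul_card_adj_le (hΩ : SwitchClosed Ω c U) (huv : u ≠ v) (hu : u ∈ U) :
    ((#U : ℝ) - 1 - 2 * Fintype.card ι) * #{M ∈ Ω | (M c).Adj u v} ≤ #Ω := by
  have h_switch : ((#U : ℝ) - 2 - 2 * Fintype.card ι) * #{M ∈ Ω | (M c).Adj u v} ≤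
      1 * #{M ∈ Ω | ¬ (M c).Adj u v} := by
    refine mul_card_le_mul_card_of_switchColour (c := c) u
      (fun M => switchTargets M c (U \ {u, v}) u) (fun M => {(v, partner (M c) u)})
      (fun M hM => ?_) (by simp) ?_ ?_
    · have h_targets := card_sub_le_card_switchTargets_sdiff
        (hΩ.isOneFactor M (mem_filter.1 hM).1) c U {u, v} u
      rwa [card_pair huv] at h_targets
    all_goals
      intro M hM x hx
      obtain ⟨hM, h_adj⟩ := mem_filter.1 hM
      have hMc := hΩ.isOneFactor M hM c
      obtain ⟨hxU, hx_legal⟩ := mem_switchTargets.1 hx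
      simp only [mem_sdiff, mem_insert, mem_singleton, not_or] at hxU
      have h_partner := partner_switchColour_partner hMc (Ne.symm hxU.2.1)
    · have h_new := hΩ.switch_mem M hM u hu x (mem_switchTargets.2 ⟨hxU.1, hx_legal⟩)
      rw [mem_filter, (hΩ.isOneFactor _ h_new c).adj_iff, h_partner]
      exact ⟨h_new, hxU.2.2⟩
    · rw [mem_singleton, h_partner, hMc.adj_iff.1 h_adj]
  have h_split : (#{M ∈ Ω | (M c).Adj u v} : ℝ) + #{M ∈ Ω | ¬ (M c).Adj u v} = #Ω := by
    exact_mod_cast card_filter_add_card_filter_not _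
  linarith

open Classical in
/-- Moving the partner of `v` away from `partner (M c) u` by a switching leaves the edge of colour
`c` at `u` in place, so the old partner of `v` can be recovered up to `Fintype.card ι` choices. -/
theorem mul_card_partners_adj_le (hΩ : SwitchClosed Ω c U) (hv : v ∈ U) :
    ((#U : ℝ) - 4 - 2 * Fintype.card ι) * #{M ∈ Ω | ¬ (M c).Adj u v ∧
        (otherColours M c).Adj (partner (M c) u) (partner (M c) v)} ≤
      Fintype.card ι * #Ω := by
  refine mul_card_le_mul_card_of_switchColour (c := c) v
    (fun M => switchTargets M c (U \ {u, v, partner (M c) u, partner (M c) v}) v)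
    (fun M => otherPartners M c (partner (M c) u) ×ˢ {partner (M c) v})
    (fun M hM => ?_) (fun M _ => ?_) ?_ ?_
  · have h_targets := card_sub_le_card_switchTargets_sdiff
      (hΩ.isOneFactor M (mem_filter.1 hM).1) c U {u, v, partner (M c) u, partner (M c) v} v
    have h_four : (#{u, v, partner (M c) u, partner (M c) v} : ℝ) ≤ 4 := by
      exact_mod_cast card_le_four
    linarith
  · rw [card_product, card_singleton, mul_one]
    exact_mod_cast card_otherPartners_le M c (partner (M c) u)
  all_goals
    intro M hM x hx
    obtain ⟨hM, h_adj, h_partners⟩ := mem_filter.1 hM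
    have hMc := hΩ.isOneFactor M hM c
    obtain ⟨hxU, hx_legal⟩ := mem_switchTargets.1 hx
    have h_new := hΩ.switch_mem M hM v hv x
      (mem_switchTargets.2 ⟨(mem_sdiff.1 hxU).1, hx_legal⟩)
  · exact h_new
  · simp only [mem_sdiff, mem_insert, mem_singleton, not_or] at hxU
    obtain ⟨-, hxu, hxv, hxpu, -⟩ := hxU
    have hu_ne : u ≠ partner (M c) v := fun h => h_adj (hMc.adj_iff.2 h.symm).symm
    have hu_partner : partner (switchColour M c (partner (M c) v) x c) u = partner (M c) u := by
      rw [switchColour_self,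
        hMc.partner_switch_of_ne hu_ne (Ne.symm hxu) h_partners.ne (Ne.symm hxpu)]
    rw [mem_product, mem_singleton, partner_switchColour_partner hMc (Ne.symm hxv), hu_partner,
      mem_otherPartners (hΩ.isOneFactor _ h_new), otherColours_switchColour]
    exact ⟨h_partners, rfl⟩

end SwitchClosed

open Classical in
theorem mul_card_otherColours_adj_le {k : ℝ} (hk : 0 ≤ k)
    (h : ∀ j ≠ c, k * #{M ∈ Ω | (M j).Adj u v} ≤ #Ω) :
    k * #{M ∈ Ω | (otherColours M c).Adj u v} ≤ Fintype.card ι * #Ω := by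
  have h_subset : {M ∈ Ω | (otherColours M c).Adj u v} ⊆
      (univ.erase c).biUnion fun j => {M ∈ Ω | (M j).Adj u v} := by
    intro M hM
    obtain ⟨hM, h_adj⟩ := mem_filter.1 hM
    obtain ⟨j, hj, hMj⟩ := otherColours_adj.1 h_adj
    exact mem_biUnion.2 ⟨j, by simpa using hj, mem_filter.2 ⟨hM, hMj⟩⟩
  have h_union : (#{M ∈ Ω | (otherColours M c).Adj u v} : ℝ) ≤
      ∑ j ∈ univ.erase c, (#{M ∈ Ω | (M j).Adj u v} : ℝ) := by
    exact_mod_cast (card_le_card h_subset).trans card_biUnion_le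
  calc k * #{M ∈ Ω | (otherColours M c).Adj u v}
      ≤ ∑ j ∈ univ.erase c, k * (#{M ∈ Ω | (M j).Adj u v} : ℝ) := by
        rw [← mul_sum]
        exact mul_le_mul_of_nonneg_left h_union hk
    _ ≤ ∑ _j ∈ univ.erase c, (#Ω : ℝ) := sum_le_sum fun j hj => h j (ne_of_mem_erase hj)
    _ ≤ Fintype.card ι * #Ω := by
        rw [sum_const, nsmul_eq_mul]
        gcongr
        exact card_le_univ _

/-- With `p` the probability of the edge and `s`, `b` those of the two exceptional families, this is
the numerical content of the switching inequalities. -/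
theorem abs_sub_one_div_le {n d m p s b : ℝ} (hd : 1 ≤ d) (hdn : 8 * d + 16 ≤ n)
    (hnm : n ≤ 2 * m) (hp : 0 ≤ p) (h_upper : (m - 1 - 2 * d) * p ≤ 1)
    (h_lower : 1 ≤ (m - 1) * p + s + b) (hs : (m - 4 - 2 * d) * s ≤ d)
    (hb : (n - 1 - 2 * d) * b ≤ d) :
    |p - 1 / m| ≤ 12 * d / n / m := by
  have hn : 0 < n := by linarith
  have hm : 0 < m := by linarith
  have hp_le : p ≤ 4 / n := by
    rw [le_div_iff₀ hn]
    nlinarith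
  have hs_le : s ≤ 4 * d / n := by
    rw [le_div_iff₀ hn]
    nlinarith
  have hb_le : b ≤ 4 * d / n := by
    rw [le_div_iff₀ hn]
    nlinarith
  have h_relative : |m * p - 1| ≤ 12 * d / n := by
    rw [abs_le]
    constructor
    · have : 12 * d / n = 3 * (4 * d / n) := by ring
      have : 0 ≤ 4 * d / n := by positivity
      linarith
    · calc m * p - 1 ≤ (1 + 2 * d) * p := by linarith
        _ ≤ 3 * d * (4 / n) := by gcongr; linarith
        _ = 12 * d / n := by ring
  calc |p - 1 / m| = |m * p - 1| / m := by
        rw [← abs_of_pos hm, ← abs_div, abs_of_pos hm]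
        congr 1
        field_simp
    _ ≤ 12 * d / n / m := by gcongr

open Classical in
theorem SwitchClosed.abs_card_div_card_sub_le {n : ℝ} (hΩ : SwitchClosed Ω c U)
    (h_nonempty : Ω.Nonempty) (hn : 8 * Fintype.card ι + 16 ≤ n) (hU : n ≤ 2 * #U) (huv : u ≠ v)
    (hu : u ∈ U) (hv : v ∈ U)
    (h_other : ∀ j ≠ c, (n - 1 - 2 * Fintype.card ι) * #{M ∈ Ω | (M j).Adj u v} ≤ #Ω) :
    |(#{M ∈ Ω | (M c).Adj u v} : ℝ) / #Ω - 1 / #U| ≤ 12 * Fintype.card ι / n / #U := by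
  have hΩ_pos : (0 : ℝ) < #Ω := by exact_mod_cast h_nonempty.card_pos
  have hd : (1 : ℝ) ≤ Fintype.card ι := by exact_mod_cast Fintype.card_pos_iff.2 ⟨c⟩
  refine abs_sub_one_div_le (s := #{M ∈ Ω | ¬ (M c).Adj u v ∧
      (otherColours M c).Adj (partner (M c) u) (partner (M c) v)} / #Ω)
    (b := #{M ∈ Ω | (otherColours M c).Adj u v} / #Ω) hd hn hU (by positivity) ?_ ?_ ?_ ?_
  · rw [← mul_div_assoc, div_le_one hΩ_pos]
    exact hΩ.mul_card_adj_le huv hu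
  · rw [← mul_div_assoc, ← add_div, ← add_div, one_le_div hΩ_pos]
    exact hΩ.card_le huv hu hv
  · rw [← mul_div_assoc, div_le_iff₀ hΩ_pos]
    exact hΩ.mul_card_partners_adj_le hv
  · rw [← mul_div_assoc, div_le_iff₀ hΩ_pos]
    exact mul_card_otherColours_adj_le (by linarith) h_other

end Switching

section Tuples

open Finset

variable {n d : ℕ} {M N : Fin d → SimpleGraph (Fin n)} {L : SimpleGraph (Fin n)}
  {F : Set (Fin d)} {c j : Fin d} {u v w x : Fin n}

namespace IsPMTuple

theorem isOneFactor (hM : IsPMTuple M) (j : Fin d) : IsOneFactor (M j) :=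
  isOneFactor_iff_natCard_neighborSet.2 (hM.1 j)

theorem disjoint_otherColours (hM : IsPMTuple M) (c : Fin d) :
    Disjoint (M c) (otherColours M c) := by
  simp only [otherColours, disjoint_iSup_iff]
  exact fun j hj => hM.2 c j hj.symm

protected theorem switchColour (hM : IsPMTuple M) {U : Finset (Fin n)}
    (hx : x ∈ switchTargets M c U w) : IsPMTuple (switchColour M c (partner (M c) w) x) := by
  obtain ⟨-, h_wx, h_partners⟩ := mem_switchTargets.1 hx
  have hMc := hM.isOneFactor c
  have h_disjoint : ∀ j ≠ c, Disjoint (switch (M c) (partner (M c) w) x) (M j) := fun j hj =>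
    (hMc.disjoint_switch (hM.disjoint_otherColours c) h_partners
      (by rwa [hMc.partner_partner, SimpleGraph.adj_comm])).mono_right (le_iSup₂_of_le j hj le_rfl)
  refine ⟨fun j => isOneFactor_iff_natCard_neighborSet.1 ?_, fun i j hij => ?_⟩
  · by_cases hj : j = c
    · subst hj
      rw [switchColour_self]
      exact hMc.switch _ _
    · rw [switchColour_of_ne hj]
      exact hM.isOneFactor j
  · by_cases hi : i = c
    · subst hi
      rw [switchColour_self, switchColour_of_ne hij.symm]
      exact h_disjoint j hij.symm
    · rw [switchColour_of_ne hi]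
      by_cases hj : j = c
      · subst hj
        rw [switchColour_self]
        exact (h_disjoint i hi).symm
      · rw [switchColour_of_ne hj]
        exact hM.2 i j hij

end IsPMTuple

open Classical in
/-- The tuples of pairwise disjoint perfect matchings that agree with `N` in the colours of `F` and
whose matching of colour `c` contains `L`. -/
noncomputable def conditionedTuples (F : Set (Fin d)) (N : Fin d → SimpleGraph (Fin n)) (c : Fin d)
    (L : SimpleGraph (Fin n)) : Finset (Fin d → SimpleGraph (Fin n)) :=
  {M | IsPMTuple M ∧ (∀ j ∈ F, M j = N j) ∧ L ≤ M c}

theorem mem_conditionedTuples :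
    M ∈ conditionedTuples F N c L ↔ IsPMTuple M ∧ (∀ j ∈ F, M j = N j) ∧ L ≤ M c := by
  simp [conditionedTuples]

open Classical in
theorem tupleCondProb_eq_card_div_card (F : Set (Fin d)) (N : Fin d → SimpleGraph (Fin n))
    (c : Fin d) (L : SimpleGraph (Fin n)) (B : (Fin d → SimpleGraph (Fin n)) → Prop) :
    tupleCondProb n d (fun M => (∀ j ∈ F, M j = N j) ∧ L ≤ M c) B =
      #{M ∈ conditionedTuples F N c L | B M} / #(conditionedTuples F N c L) := by
  simp only [tupleCondProb, conditionedTuples, filter_filter, and_assoc]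

theorem switchColour_eq_of_mem (hc : c ∉ F) (hN : ∀ j ∈ F, M j = N j) (a b : Fin n) :
    ∀ j ∈ F, switchColour M c a b j = N j := fun j hj => by
  rw [switchColour_of_ne (ne_of_mem_of_not_mem hj hc), hN j hj]

theorem switchClosed_conditionedTuples_uncovered (hc : c ∉ F) :
    SwitchClosed (conditionedTuples F N c L) c (uncovered L) where
  isOneFactor _ hM := (mem_conditionedTuples.1 hM).1.isOneFactor
  partner_mem M hM w hw := by
    obtain ⟨hM, -, hL⟩ := mem_conditionedTuples.1 hM
    exact (hM.isOneFactor c).partner_mem_uncovered hL hw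
  switch_mem M hM w hw x hx := by
    obtain ⟨hM, hN, hL⟩ := mem_conditionedTuples.1 hM
    refine mem_conditionedTuples.2 ⟨hM.switchColour hx, switchColour_eq_of_mem hc hN _ _, ?_⟩
    rw [switchColour_self]
    exact le_switch hL ((hM.isOneFactor c).partner_mem_uncovered hL hw) (mem_switchTargets.1 hx).1

theorem switchClosed_conditionedTuples_univ (hj : j ∉ F) (hjc : j ≠ c) :
    SwitchClosed (conditionedTuples F N c L) j univ where
  isOneFactor _ hM := (mem_conditionedTuples.1 hM).1.isOneFactor
  partner_mem _ _ _ _ := mem_univ _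
  switch_mem M hM w _ x hx := by
    obtain ⟨hM, hN, hL⟩ := mem_conditionedTuples.1 hM
    refine mem_conditionedTuples.2 ⟨hM.switchColour hx, switchColour_eq_of_mem hj hN _ _, ?_⟩
    rwa [switchColour_of_ne hjc.symm]

open Classical in
theorem mul_card_conditionedTuples_adj_le (huv : u ≠ v) (hN : ∀ j ∈ F, ¬ (N j).Adj u v)
    (hjc : j ≠ c) :
    ((n : ℝ) - 1 - 2 * d) * #{M ∈ conditionedTuples F N c L | (M j).Adj u v} ≤
      #(conditionedTuples F N c L) := by
  by_cases hj : j ∈ F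
  · have h_empty : {M ∈ conditionedTuples F N c L | (M j).Adj u v} = ∅ := by
      refine filter_eq_empty_iff.2 fun M hM => ?_
      rw [(mem_conditionedTuples.1 hM).2.1 j hj]
      exact hN j hj
    simp [h_empty]
  · simpa using (switchClosed_conditionedTuples_univ hj hjc).mul_card_adj_le huv (mem_univ u)

theorem stmt9_general (hn : 8 * d + 16 ≤ n) (hc : c ∉ F) (hL : 4 * Nat.card L.edgeSet ≤ n)
    (h_possible : ∃ M, IsPMTuple M ∧ (∀ j ∈ F, M j = N j) ∧ L ≤ M c) (huv : u ≠ v)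
    (hu : ∀ w, ¬ L.Adj u w) (hv : ∀ w, ¬ L.Adj v w) (hN : ∀ j ∈ F, ¬ (N j).Adj u v) :
    |tupleCondProb n d (fun M => (∀ j ∈ F, M j = N j) ∧ L ≤ M c) (fun M => (M c).Adj u v) -
        1 / ((n : ℝ) - 2 * Nat.card L.edgeSet)| ≤
      12 * d / n / ((n : ℝ) - 2 * Nat.card L.edgeSet) := by
  classical
  obtain ⟨M, hM, hMN, hLM⟩ := h_possible
  have h_card : (#(uncovered L) : ℝ) = n - 2 * Nat.card L.edgeSet := by
    have h := card_uncovered_add fun v w x hw hx =>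
      (hM.isOneFactor c v).unique (hLM hw) (hLM hx)
    rw [Fintype.card_fin] at h
    rw [eq_sub_iff_add_eq]
    exact_mod_cast h
  have hn_real : 8 * (d : ℝ) + 16 ≤ n := by exact_mod_cast hn
  have hL_real : 4 * (Nat.card L.edgeSet : ℝ) ≤ n := by exact_mod_cast hL
  rw [tupleCondProb_eq_card_div_card, ← h_card]
  simpa using (switchClosed_conditionedTuples_uncovered hc).abs_card_div_card_sub_le
    ⟨M, mem_conditionedTuples.2 ⟨hM, hMN, hLM⟩⟩ (by simpa using hn_real) (by linarith) huv
    (mem_uncovered.2 hu) (mem_uncovered.2 hv)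
    fun j hjc => by simpa using mul_card_conditionedTuples_adj_le huv hN hjc

theorem twelve_mul_div_le_twelve_div_sqrt (h : d ^ 2 ≤ n) :
    12 * (d : ℝ) / n ≤ 12 / √n := by
  have hd : (d : ℝ) ≤ √n := Real.le_sqrt_of_sq_le (by exact_mod_cast h)
  calc 12 * (d : ℝ) / n ≤ 12 * √n / n := by gcongr
    _ = 12 / √n := by rw [mul_div_assoc, Real.sqrt_div_self', mul_one_div]

theorem tendsto_twelve_div_sqrt :
    Filter.Tendsto (fun n : ℕ => 12 / √(n : ℝ)) Filter.atTop (nhds 0) :=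
  tendsto_const_nhds.div_atTop (Real.tendsto_sqrt_atTop.comp tendsto_natCast_atTop_atTop)

end Tuples

/-- There is a sequence `ε_n → 0` with the following property.  Sample
`(M_1,…,M_d) = G''(n,d)` (even `n`, `4 ≤ d ≤ n-1`, `d³ ≤ n`), fix `i ∈ [k]` with
`k = ⌊d/4⌋` (here 0-indexed: `i < d/4`, the matching colour being index `4i+3`), fix
perfect matchings `N c` for all fixed colours `c`, fix `t ∈ [1, n/4]` and a matching `M'`
with `t` edges, all pairwise edge-disjoint, such that the conditioning event
`E = {M_c = N_c for all fixed colours c, and M' ⊆ M_{4i}}` has positive probability.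
Then for all vertices `u ≠ v` not covered by `M'` with `uv` not an edge of `M'` nor of
any `N c`, the conditional probability that `uv ∈ M_{4i}` is `(1 + O(ε_n))/(n-2t)`. -/
theorem stmt9 :
    ∃ ε : ℕ → ℝ, Filter.Tendsto ε Filter.atTop (nhds 0) ∧
      ∀ n d : ℕ, Even n → 4 ≤ d → d ≤ n - 1 → d ^ 3 ≤ n →
      ∀ i : ℕ, ∀ hi : i < d / 4,
      ∀ N : Fin d → SimpleGraph (Fin n),
        (∀ c : Fin d, FixedColour d c → ∀ v, Nat.card ((N c).neighborSet v) = 1) →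
        (∀ c c' : Fin d, FixedColour d c → FixedColour d c' → c ≠ c' →
          Disjoint (N c) (N c')) →
      ∀ t : ℕ, 1 ≤ t → t ≤ n / 4 →
      ∀ M' : SimpleGraph (Fin n),
        (∀ v w x : Fin n, M'.Adj v w → M'.Adj v x → w = x) →
        Nat.card M'.edgeSet = t →
        (∀ c : Fin d, FixedColour d c → Disjoint (N c) M') →
        (∃ M : Fin d → SimpleGraph (Fin n), IsPMTuple M ∧
          ((∀ c, FixedColour d c → M c = N c) ∧ M' ≤ M ⟨4 * i + 3, by omega⟩)) →
      ∀ u v : Fin n, u ≠ v →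
        (∀ w, ¬ M'.Adj u w) → (∀ w, ¬ M'.Adj v w) →
        (∀ c : Fin d, FixedColour d c → ¬ (N c).Adj u v) →
        |tupleCondProb n d
            (fun M => (∀ c, FixedColour d c → M c = N c) ∧ M' ≤ M ⟨4 * i + 3, by omega⟩)
            (fun M => (M ⟨4 * i + 3, by omega⟩).Adj u v) -
          1 / ((n : ℝ) - 2 * t)| ≤ ε n / ((n : ℝ) - 2 * t) := by
  refine ⟨fun n => 12 / √n, tendsto_twelve_div_sqrt, ?_⟩
  rintro n d - hd - hdn i hi N - - t - ht M' - rfl - h_possible u v huv hu hv hN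
  have hn : 8 * d + 16 ≤ n :=
    calc 8 * d + 16 ≤ 4 ^ 2 * d := by omega
      _ ≤ d ^ 2 * d := by gcongr
      _ ≤ n := hdn
  have hd_sq : d ^ 2 ≤ n := (Nat.pow_le_pow_right (by omega) (by omega)).trans hdn
  have h_not_fixed : (⟨4 * i + 3, by omega⟩ : Fin d) ∉ {c | FixedColour d c} :=
    fun h => h.2 (by simp)
  have h_nonneg : 0 ≤ (n : ℝ) - 2 * Nat.card M'.edgeSet := by
    have : (2 * Nat.card M'.edgeSet : ℝ) ≤ n := by exact_mod_cast (by omega)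
    linarith
  exact (stmt9_general hn h_not_fixed (by omega) h_possible huv hu hv hN).trans
    (div_le_div_of_nonneg_right (twelve_mul_div_le_twelve_div_sqrt hd_sq) h_nonneg)
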